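/- arXiv:2007.09235 — 2 statements merged into one kernel-verified Lean document; each statement's English description precedes it below -/
import Mathlib

section
/- A graph G is Hadamard diagonalizable if and only if its complement G^c is Hadamard diagonalizable. -/
open Matrix

def IsHadamardMatrix {n : ℕ} (H : Matrix (Fin n) (Fin n) ℝ) : Prop :=
  (∀ i j, H i j = 1 ∨ H i j = -1) ∧ Hᵀ * H = (n : ℝ) • 1

open scoped Classical in
noncomputable def lap {n : ℕ} (G : SimpleGraph (Fin n)) : Matrix (Fin n) (Fin n) ℝ :=
  G.lapMatrix ℝ

def HadamardDiagonalizable {n : ℕ} (G : SimpleGraph (Fin n)) : Prop :=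
  ∃ (H : Matrix (Fin n) (Fin n) ℝ) (Λ : Fin n → ℝ),
    IsHadamardMatrix H ∧ lap G = (n : ℝ)⁻¹ • (H * Matrix.diagonal Λ * Hᵀ)

theorem IsHadamardMatrix.mul_transpose {n : ℕ} {H : Matrix (Fin n) (Fin n) ℝ}
    (hH : IsHadamardMatrix H) : H * Hᵀ = (n : ℝ) • 1 := by
  rcases Nat.eq_zero_or_pos n with rfl | hn
  · exact Subsingleton.elim _ _
  have hn' : (n : ℝ) ≠ 0 := by positivity
  have h : ((n : ℝ)⁻¹ • Hᵀ) * H = 1 := by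
    rw [Matrix.smul_mul, hH.2, smul_smul, inv_mul_cancel₀ hn', one_smul]
  have h' := mul_eq_one_comm.mp h
  rw [Matrix.mul_smul] at h'
  rw [← h', smul_smul, mul_inv_cancel₀ hn', one_smul]

/-- Rescaling the rows of a Hadamard matrix by signs gives a Hadamard matrix. -/
theorem IsHadamardMatrix.diagonal_mul {n : ℕ} {H : Matrix (Fin n) (Fin n) ℝ}
    (hH : IsHadamardMatrix H) {d : Fin n → ℝ} (hd : ∀ i, d i = 1 ∨ d i = -1) :
    IsHadamardMatrix (Matrix.diagonal d * H) := by
  refine ⟨fun i j => ?_, ?_⟩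
  · rw [Matrix.diagonal_mul]
    rcases hd i with h | h <;> rcases hH.1 i j with h' | h' <;> simp [h, h']
  · have h1 : Matrix.diagonal d * Matrix.diagonal d = 1 := by
      rw [Matrix.diagonal_mul_diagonal, ← Matrix.diagonal_one]
      congr 1
      ext i
      rcases hd i with h | h <;> simp [h]
    rw [Matrix.transpose_mul, Matrix.diagonal_transpose, Matrix.mul_assoc,
      ← Matrix.mul_assoc (Matrix.diagonal d), h1, Matrix.one_mul, hH.2]

theorem lap_compl {n : ℕ} (G : SimpleGraph (Fin n)) :
    lap Gᶜ = (n : ℝ) • 1 - Matrix.of (fun _ _ => 1) - lap G := by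
  classical
  ext i j
  by_cases hij : i = j
  · subst hij
    have h := G.degree_compl i
    have hlt := G.degree_lt_card_verts i
    rw [Fintype.card_fin] at h hlt
    have h2 : Gᶜ.degree i + 1 + G.degree i = n := by omega
    have h3 : (Gᶜ.degree i : ℝ) + 1 + G.degree i = n := by exact_mod_cast h2
    simp only [lap, SimpleGraph.lapMatrix, SimpleGraph.degMatrix, Matrix.sub_apply,
      Matrix.diagonal_apply_eq, SimpleGraph.adjMatrix_apply, SimpleGraph.irrefl, if_false,
      Matrix.smul_apply, Matrix.one_apply_eq, Matrix.of_apply, smul_eq_mul]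
    convert (by linarith : (Gᶜ.degree i : ℝ) - 0 = n * 1 - 1 - (G.degree i - 0)) using 4
    rfl
  · by_cases ha : G.Adj i j <;>
      simp [lap, SimpleGraph.lapMatrix, SimpleGraph.degMatrix, hij, ha]

/-- Conjugation by a diagonal matrix of signs constant along edges fixes the Laplacian. -/
theorem diagonal_mul_lap_mul_diagonal {n : ℕ} (G : SimpleGraph (Fin n)) {d : Fin n → ℝ}
    (hd : ∀ i, d i = 1 ∨ d i = -1) (hG : ∀ i j, G.Adj i j → d i = d j) :
    Matrix.diagonal d * lap G * Matrix.diagonal d = lap G := by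
  classical
  ext i j
  rw [Matrix.mul_diagonal, Matrix.diagonal_mul]
  have hsq : d i * d i = 1 := by rcases hd i with h | h <;> simp [h]
  by_cases h : i = j ∨ G.Adj i j
  · have : d j = d i := by
      rcases h with rfl | h
      · rfl
      · exact (hG i j h).symm
    rw [this]
    linear_combination (lap G i j) * hsq
  · rw [not_or] at h
    simp [lap, SimpleGraph.lapMatrix, SimpleGraph.degMatrix, h.1, h.2]

/-- Some column of a diagonalizing Hadamard matrix belongs to the eigenvalue zero. -/
theorem exists_eigenvalue_eq_zero {n : ℕ} (hn : 0 < n) {G : SimpleGraph (Fin n)}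
    {H : Matrix (Fin n) (Fin n) ℝ} {Λ : Fin n → ℝ} (hH : IsHadamardMatrix H)
    (hL : lap G = (n : ℝ)⁻¹ • (H * Matrix.diagonal Λ * Hᵀ)) : ∃ k, Λ k = 0 := by
  classical
  have : Nonempty (Fin n) := ⟨⟨0, hn⟩⟩
  have hn' : (n : ℝ) ≠ 0 := by positivity
  have hdet : (lap G).det = 0 := by
    unfold lap
    exact SimpleGraph.det_lapMatrix_eq_zero _
  have hHH : H.det * H.det ≠ 0 := by
    have h := congrArg Matrix.det hH.2
    rw [Matrix.det_mul, Matrix.det_transpose, Matrix.det_smul, Matrix.det_one, mul_one] at h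
    rw [h]
    exact pow_ne_zero _ hn'
  have hHd : H.det ≠ 0 := left_ne_zero_of_mul hHH
  rw [hL, Matrix.det_smul, Matrix.det_mul, Matrix.det_mul, Matrix.det_transpose,
    Matrix.det_diagonal] at hdet
  simpa [hn', hHd, Finset.prod_eq_zero_iff] using hdet

theorem lap_mulVec_col {n : ℕ} {G : SimpleGraph (Fin n)}
    {H : Matrix (Fin n) (Fin n) ℝ} {Λ : Fin n → ℝ} (hn : 0 < n) (hH : IsHadamardMatrix H)
    (hL : lap G = (n : ℝ)⁻¹ • (H * Matrix.diagonal Λ * Hᵀ)) (k : Fin n) :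
    lap G *ᵥ H.col k = Λ k • H.col k := by
  have hn' : (n : ℝ) ≠ 0 := by positivity
  have h : lap G * H = H * Matrix.diagonal Λ := by
    rw [hL, Matrix.smul_mul, Matrix.mul_assoc, hH.2, Matrix.mul_smul, Matrix.mul_one,
      smul_smul, inv_mul_cancel₀ hn', one_smul]
  ext i
  have := congrFun (congrFun h i) k
  rw [Matrix.mul_diagonal, mul_comm] at this
  exact this

theorem HadamardDiagonalizable.compl {n : ℕ} {G : SimpleGraph (Fin n)}
    (hG : HadamardDiagonalizable G) : HadamardDiagonalizable Gᶜ := by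
  classical
  obtain ⟨H, Λ, hH, hL⟩ := hG
  rcases Nat.eq_zero_or_pos n with rfl | hn
  · exact ⟨H, Λ, hH, Subsingleton.elim _ _⟩
  have hn' : (n : ℝ) ≠ 0 := by positivity
  obtain ⟨k, hk⟩ := exists_eigenvalue_eq_zero hn hH hL
  have hconst : ∀ i j, G.Adj i j → H.col k i = H.col k j := by
    have h := lap_mulVec_col hn hH hL k
    rw [hk, zero_smul] at h
    unfold lap at h
    exact (SimpleGraph.lapMatrix_mulVec_eq_zero_iff_forall_adj _).mp h
  have hsign : ∀ i, H.col k i = 1 ∨ H.col k i = -1 := fun i => hH.1 i k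
  have hK := hH.diagonal_mul hsign
  have hKL : lap G = (n : ℝ)⁻¹ • ((Matrix.diagonal (H.col k) * H) * Matrix.diagonal Λ *
      (Matrix.diagonal (H.col k) * H)ᵀ) := by
    rw [← diagonal_mul_lap_mul_diagonal G hsign hconst, hL]
    simp only [Matrix.transpose_mul, Matrix.diagonal_transpose, Matrix.mul_smul,
      Matrix.smul_mul, Matrix.mul_assoc]
  have hKk : ∀ i, (Matrix.diagonal (H.col k) * H) i k = 1 := fun i => by
    rw [Matrix.diagonal_mul]
    rcases hH.1 i k with h | h <;> simp [Matrix.col, h]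
  generalize Matrix.diagonal (H.col k) * H = K at hK hKL hKk
  have hJ : K * Matrix.diagonal (Pi.single k (n : ℝ)) * Kᵀ =
      (n : ℝ) • Matrix.of (fun _ _ => 1) := by
    ext i j
    rw [Matrix.mul_apply, Finset.sum_eq_single k]
    · simp [Matrix.mul_diagonal, hKk]
    · intro b _ hb
      simp [Matrix.mul_diagonal, hb]
    · simp
  refine ⟨K, fun i => n - (Pi.single k (n : ℝ) : Fin n → ℝ) i - Λ i, hK, ?_⟩
  have hD : Matrix.diagonal (fun i => n - (Pi.single k (n : ℝ) : Fin n → ℝ) i - Λ i) =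
      (n : ℝ) • (1 : Matrix (Fin n) (Fin n) ℝ) - Matrix.diagonal (Pi.single k (n : ℝ)) -
        Matrix.diagonal Λ := by
    rw [← Matrix.diagonal_one, ← Matrix.diagonal_smul, Matrix.diagonal_sub, Matrix.diagonal_sub]
    simp
  rw [lap_compl, hKL, hD, Matrix.mul_sub, Matrix.mul_sub, Matrix.sub_mul, Matrix.sub_mul, hJ,
    Matrix.mul_smul, Matrix.mul_one, Matrix.smul_mul, hK.mul_transpose, smul_sub, smul_sub,
    smul_smul _ (n : ℝ), inv_mul_cancel₀ hn', one_smul, smul_smul, inv_mul_cancel₀ hn', one_smul]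

theorem hadamardDiagonalizable_compl_iff {n : ℕ} (G : SimpleGraph (Fin n)) :
    HadamardDiagonalizable G ↔ HadamardDiagonalizable Gᶜ := by
  refine ⟨HadamardDiagonalizable.compl, fun h => ?_⟩
  simpa using h.compl
end

section
/- Let G be a connected graph. Then G is a complete graph or a complete bipartite graph if and only if for every four distinct vertices u, v, w, x of G, if uv, vw, and wx are edges of G, then xu is also an edge of G. -/
namespace SimpleGraph

variable {V : Type*} {G : SimpleGraph V}

theorem Connected.induction_adj (hconn : G.Connected) {p : V → Prop} {a : V} (ha : p a)
    (step : ∀ y z, p y → G.Adj y z → p z) (y : V) : p y := by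
  have h := (reachable_iff_reflTransGen a y).1 (hconn.preconnected a y)
  induction h with
  | refl => exact ha
  | tail _ hyz ih => exact step _ _ ih hyz

/-- Every path on four vertices closes up to a four-cycle. -/
def FourPathsClose (G : SimpleGraph V) : Prop :=
  ∀ u v w x : V, u ≠ v → u ≠ w → u ≠ x → v ≠ w → v ≠ x → w ≠ x →
    G.Adj u v → G.Adj v w → G.Adj w x → G.Adj x u

theorem FourPathsClose.adj_of_triangle (hP : G.FourPathsClose) (hconn : G.Connected) {a b c : V}
    (hab : G.Adj a b) (hbc : G.Adj b c) (hca : G.Adj c a) {u v : V} (huv : u ≠ v) :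
    G.Adj u v := by
  have close : ∀ u v w x : V, u ≠ w → u ≠ x → v ≠ x →
      G.Adj u v → G.Adj v w → G.Adj w x → G.Adj x u := fun u v w x h₁ h₂ h₃ huv hvw hwx =>
    hP u v w x huv.ne h₁ h₂ hvw.ne h₃ hwx.ne huv hvw hwx
  have step : ∀ {a b c y z : V}, G.Adj a b → G.Adj b c → G.Adj c a → (y ≠ a → G.Adj y a) →
      (y ≠ b → G.Adj y b) → (y ≠ c → G.Adj y c) → G.Adj y z → z ≠ a → G.Adj z a := by
    intro a b c y z hab hbc hca hya hyb hyc hyz hza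
    by_cases hy : y = a
    · exact hy ▸ hyz.symm
    by_cases hb : y ≠ b ∧ z ≠ b
    · exact (close z y b a hb.2 hza hy hyz.symm (hyb hb.1) hab.symm).symm
    by_cases hc : y ≠ c ∧ z ≠ c
    · exact (close z y c a hc.2 hza hy hyz.symm (hyc hc.1) hca).symm
    have hzbc : z = b ∨ z = c := by
      have := hbc.ne
      clear close
      grind
    obtain rfl | rfl := hzbc
    exacts [hab.symm, hca]
  have key : ∀ y, (y ≠ a → G.Adj y a) ∧ (y ≠ b → G.Adj y b) ∧ (y ≠ c → G.Adj y c) := by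
    refine hconn.induction_adj (a := a) ⟨fun h => (h rfl).elim, fun _ => hab, fun _ => hca.symm⟩ ?_
    rintro y z ⟨hya, hyb, hyc⟩ hyz
    exact ⟨step hab hbc hca hya hyb hyc hyz, step hbc hca hab hyb hyc hya hyz,
      step hca hab hbc hyc hya hyb hyz⟩
  obtain ⟨hua, hub, -⟩ := key u
  obtain ⟨hva, hvb, -⟩ := key v
  by_cases h₁ : u = a
  · exact h₁ ▸ (hva (h₁ ▸ huv.symm)).symm
  by_cases h₂ : v = b
  · exact h₂ ▸ hub (h₂ ▸ huv)
  by_cases h₃ : u = b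
  · exact h₃ ▸ (hvb h₂).symm
  by_cases h₄ : v = a
  · exact h₄ ▸ hua h₁
  exact (close u a b v h₃ huv (Ne.symm h₄) (hua h₁) hab (hvb h₂).symm).symm

theorem FourPathsClose.adj_iff_of_triangle_free (hP : G.FourPathsClose) (hconn : G.Connected)
    (htri : ∀ a b c, G.Adj a b → G.Adj b c → ¬ G.Adj c a) (r u v : V) :
    G.Adj u v ↔ ((G.Adj r u ∧ ¬ G.Adj r v) ∨ (¬ G.Adj r u ∧ G.Adj r v)) := by
  have close : ∀ u v w x : V, u ≠ w → u ≠ x → v ≠ x →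
      G.Adj u v → G.Adj v w → G.Adj w x → G.Adj x u := fun u v w x h₁ h₂ h₃ huv hvw hwx =>
    hP u v w x huv.ne h₁ h₂ hvw.ne h₃ hwx.ne huv hvw hwx
  have key : ∀ y, y = r ∨ G.Adj r y ∨ ∃ s, G.Adj r s ∧ G.Adj y s := by
    refine hconn.induction_adj (a := r) (Or.inl rfl) ?_
    rintro y z (rfl | hy | ⟨s, hrs, hys⟩) hyz
    · exact .inr (.inl hyz)
    · exact .inr (.inr ⟨y, hy, hyz.symm⟩)
    · by_cases hzr : z = r
      · exact .inl hzr
      by_cases hyr : y = r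
      · exact .inr (.inl (hyr ▸ hyz))
      by_cases hzs : z = s
      · exact .inr (.inl (hzs ▸ hrs))
      exact .inr (.inl (close z y s r hzs hzr hyr hyz.symm hys hrs.symm))
  have cross : ∀ u v, G.Adj r u → ¬ G.Adj r v → G.Adj u v := by
    intro u v hu hv
    obtain rfl | h | ⟨s, hrs, hvs⟩ := key v
    · exact hu.symm
    · exact (hv h).elim
    · by_cases hsu : s = u
      · exact hsu ▸ hvs.symm
      by_cases hvr : v = r
      · exact hvr ▸ hu.symm
      exact close v s r u hvr (fun h => hv (h ▸ hu)) hsu hvs hrs.symm hu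
  constructor
  · intro huv
    by_cases hu : G.Adj r u <;> by_cases hv : G.Adj r v
    · exact (htri r u v hu huv hv.symm).elim
    · exact .inl ⟨hu, hv⟩
    · exact .inr ⟨hu, hv⟩
    · obtain rfl | h | ⟨s, hrs, hus⟩ := key u
      · exact (hv huv).elim
      · exact (hu h).elim
      · exact (hv (close v u s r (fun h => hv (h ▸ hrs)) (fun h => hu (h ▸ huv.symm))
          (fun h => hv (h ▸ huv)) huv.symm hus hrs.symm)).elim
  · rintro (⟨hu, hv⟩ | ⟨hu, hv⟩)
    · exact cross u v hu hv
    · exact (cross v u hv hu).symm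

end SimpleGraph

theorem complete_or_completeBipartite_iff_fourPath {V : Type*} [Fintype V]
    (G : SimpleGraph V) (hconn : G.Connected) :
    ((∀ u v : V, u ≠ v → G.Adj u v) ∨
      (∃ A : Set V, ∀ u v : V, G.Adj u v ↔ ((u ∈ A ∧ v ∉ A) ∨ (u ∉ A ∧ v ∈ A)))) ↔
    (∀ u v w x : V, u ≠ v → u ≠ w → u ≠ x → v ≠ w → v ≠ x → w ≠ x →
      G.Adj u v → G.Adj v w → G.Adj w x → G.Adj x u) := by
  constructor
  · rintro (h | ⟨A, hA⟩) u v w x - - hux - - - huv hvw hwx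
    · exact h x u hux.symm
    · rw [hA] at *
      tauto
  · intro (hP : G.FourPathsClose)
    by_cases htri : ∃ a b c, G.Adj a b ∧ G.Adj b c ∧ G.Adj c a
    · obtain ⟨a, b, c, hab, hbc, hca⟩ := htri
      exact .inl fun u v huv => hP.adj_of_triangle hconn hab hbc hca huv
    · obtain ⟨r⟩ := hconn.nonempty
      exact .inr ⟨{y | G.Adj r y}, hP.adj_iff_of_triangle_free hconn
        (fun a b c hab hbc hca => htri ⟨a, b, c, hab, hbc, hca⟩) r⟩
end
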